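/- Let ν be a complex Borel measure on ℝ such that ∫_ℝ (λ − x)^{-2} dν(x) = 0 for every λ with Im λ < 0. Then ν is absolutely continuous with respect to Lebesgue measure. -/

import Mathlib

open MeasureTheory

/-!
Call a density `h` null if the Cauchy transform of `h • σ` vanishes on the lower half-plane.
Up to sign, `∫ (λ - x)⁻² dν(x)` is the derivative of the Cauchy transform of `ν`, which tends to
`0` along the negative imaginary axis, so the density of `ν` is null. By the resolvent identity
null densities are stable under multiplication by the kernels `(λ - x)⁻¹` with `Im λ < 0`, hence
by the algebra these generate, by exponentials of its bounded elements, and by bounded pointwise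
limits. Cover a compact Lebesgue-null set `K` by intervals of arbitrarily small total length and
add up a large negative multiple of a Poisson-type bump for each interval: this gives `Gₙ` in the
algebra with `Re Gₙ ≤ 0`, `Re Gₙ → -∞` on `K` and `Gₙ → 0` off `K`. Then `exp Gₙ` tends boundedly
to the indicator of `Kᶜ`; as null densities have integral zero, `ν(K) = 0`. Inner regularity of
`|ν|` concludes. This replaces the passage to the unit circle and the theorem of F. and M. Riesz.
-/

open Filter Metric Set Topology
open Complex (I)

/-- The kernel `x ↦ (z - x)⁻¹` of the Cauchy transform, as a function on the real line. -/
noncomputable def cauchyKernel (z : ℂ) (x : ℝ) : ℂ := (z - x)⁻¹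

section Kernel

variable {z w : ℂ}

lemma abs_im_le_norm_sub_ofReal (z : ℂ) (x : ℝ) : |z.im| ≤ ‖z - x‖ := by
  simpa using Complex.abs_im_le_norm (z - x)

lemma sub_ofReal_ne_zero (hz : z.im ≠ 0) (x : ℝ) : z - x ≠ 0 :=
  norm_pos_iff.1 ((abs_pos.2 hz).trans_le (abs_im_le_norm_sub_ofReal z x))

lemma norm_cauchyKernel_le (hz : z.im ≠ 0) (x : ℝ) : ‖cauchyKernel z x‖ ≤ |z.im|⁻¹ := by
  rw [cauchyKernel, norm_inv]
  exact inv_anti₀ (abs_pos.2 hz) (abs_im_le_norm_sub_ofReal z x)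

lemma measurable_cauchyKernel (z : ℂ) : Measurable (cauchyKernel z) :=
  (measurable_const.sub Complex.measurable_ofReal).inv

lemma hasDerivAt_cauchyKernel (hz : z.im ≠ 0) (x : ℝ) :
    HasDerivAt (fun w ↦ cauchyKernel w x) (-cauchyKernel z x ^ 2) z := by
  simpa [cauchyKernel, div_eq_mul_inv] using
    ((hasDerivAt_id z).sub_const (x : ℂ)).fun_inv (sub_ofReal_ne_zero hz x)

lemma cauchyKernel_mul_cauchyKernel (hz : z.im ≠ 0) (hw : w.im ≠ 0) (hzw : z ≠ w) (x : ℝ) :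
    cauchyKernel z x * cauchyKernel w x =
      (w - z)⁻¹ * (cauchyKernel z x - cauchyKernel w x) := by
  have hz' := sub_ofReal_ne_zero hz x
  have hw' := sub_ofReal_ne_zero hw x
  have hwz := sub_ne_zero.2 hzw.symm
  simp only [cauchyKernel]
  field_simp
  ring

lemma norm_cauchyKernel_neg_mul_I_le {t : ℝ} (ht : 0 < t) (x : ℝ) :
    ‖cauchyKernel (-(t * I)) x‖ ≤ t⁻¹ := by
  simpa [abs_of_pos ht] using
    norm_cauchyKernel_le (z := -(t * I)) (by simpa using ht.ne') x

lemma tendsto_neg_mul_I_mul_cauchyKernel (x : ℝ) :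
    Tendsto (fun t : ℝ ↦ -(t * I) * cauchyKernel (-(t * I)) x) atTop (𝓝 1) := by
  have hzero : Tendsto (fun t : ℝ ↦ cauchyKernel (-(t * I)) x) atTop (𝓝 0) :=
    squeeze_zero_norm' ((eventually_gt_atTop 0).mono fun t ht ↦
      norm_cauchyKernel_neg_mul_I_le ht x) tendsto_inv_atTop_zero
  have hlim : Tendsto (fun t : ℝ ↦ 1 + x * cauchyKernel (-(t * I)) x) atTop (𝓝 1) := by
    simpa using (hzero.const_mul (x : ℂ)).const_add 1
  refine hlim.congr' ((eventually_gt_atTop 0).mono fun t ht ↦ ?_)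
  have hne := sub_ofReal_ne_zero (z := -(t * I)) (by simpa using ht.ne') x
  simp only [cauchyKernel]
  field_simp
  ring

end Kernel

variable {E : Type*} [NormedAddCommGroup E] [NormedSpace ℂ E]

/-- The Cauchy transform of the measure `h • σ`. -/
noncomputable def cauchyTransform (σ : Measure ℝ) (h : ℝ → E) (z : ℂ) : E :=
  ∫ x, cauchyKernel z x • h x ∂σ

section Transform

variable {σ : Measure ℝ} {h h₁ h₂ : ℝ → E} {z w : ℂ}

lemma integrable_cauchyKernel_smul (hh : Integrable h σ) (hz : z.im ≠ 0) :
    Integrable (fun x ↦ cauchyKernel z x • h x) σ :=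
  hh.bdd_smul _ (measurable_cauchyKernel z).aestronglyMeasurable
    (.of_forall (norm_cauchyKernel_le hz))

lemma cauchyTransform_add (hh₁ : Integrable h₁ σ) (hh₂ : Integrable h₂ σ) (hz : z.im ≠ 0) :
    cauchyTransform σ (h₁ + h₂) z = cauchyTransform σ h₁ z + cauchyTransform σ h₂ z := by
  simp only [cauchyTransform, Pi.add_apply, smul_add]
  exact integral_add (integrable_cauchyKernel_smul hh₁ hz) (integrable_cauchyKernel_smul hh₂ hz)

lemma cauchyTransform_smul (c : ℂ) (h : ℝ → E) (z : ℂ) :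
    cauchyTransform σ (c • h) z = c • cauchyTransform σ h z := by
  simp only [cauchyTransform, Pi.smul_apply, smul_comm _ c, integral_smul]

lemma norm_cauchyTransform_le (hh : Integrable h σ) (hz : z.im ≠ 0) :
    ‖cauchyTransform σ h z‖ ≤ |z.im|⁻¹ * ∫ x, ‖h x‖ ∂σ := by
  rw [← integral_const_mul]
  refine norm_integral_le_of_norm_le (hh.norm.const_mul _) (.of_forall fun x ↦ ?_)
  rw [norm_smul]
  gcongr
  exact norm_cauchyKernel_le hz x

lemma hasDerivAt_cauchyTransform (hh : Integrable h σ) (hz : z.im ≠ 0) :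
    HasDerivAt (cauchyTransform σ h) (-∫ x, cauchyKernel z x ^ 2 • h x ∂σ) z := by
  have hr : 0 < |z.im| / 2 := by positivity
  have him : ∀ w ∈ ball z (|z.im| / 2), |z.im| / 2 ≤ |w.im| := fun w hw ↦ by
    have hzw : |z.im - w.im| < |z.im| / 2 := by
      rw [mem_ball, dist_comm, Complex.dist_eq] at hw
      exact (Complex.abs_im_le_norm (z - w)).trans_lt hw
    linarith [abs_sub_abs_le_abs_sub z.im w.im]
  have him' : ∀ w ∈ ball z (|z.im| / 2), w.im ≠ 0 := fun w hw ↦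
    abs_pos.1 (hr.trans_le (him w hw))
  have hderiv := (hasDerivAt_integral_of_dominated_loc_of_deriv_le
    (F := fun w x ↦ cauchyKernel w x • h x) (F' := fun w x ↦ -cauchyKernel w x ^ 2 • h x)
    (bound := fun x ↦ (|z.im| / 2)⁻¹ ^ 2 * ‖h x‖) (ball_mem_nhds z hr)
    (.of_forall fun w ↦ (measurable_cauchyKernel w).aestronglyMeasurable.smul hh.1)
    (integrable_cauchyKernel_smul hh hz)
    (((measurable_cauchyKernel z).pow_const 2).neg.aestronglyMeasurable.smul hh.1)
    (.of_forall fun x w hw ↦ ?_) (hh.norm.const_mul _)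
    (.of_forall fun x w hw ↦ (hasDerivAt_cauchyKernel (him' w hw) x).smul_const (h x))).2
  · simp only [neg_smul, integral_neg] at hderiv
    exact hderiv
  · rw [norm_smul, norm_neg, norm_pow]
    gcongr
    exact (norm_cauchyKernel_le (him' w hw) x).trans (inv_anti₀ hr (him w hw))

lemma cauchyTransform_cauchyKernel_smul (hh : Integrable h σ) (hz : z.im ≠ 0) (hw : w.im ≠ 0)
    (hzw : z ≠ w) :
    cauchyTransform σ (cauchyKernel w • h) z =
      (w - z)⁻¹ • (cauchyTransform σ h z - cauchyTransform σ h w) := by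
  simp only [cauchyTransform, Pi.smul_apply', smul_smul,
    cauchyKernel_mul_cauchyKernel hz hw hzw]
  simp only [← smul_smul, sub_smul, integral_smul]
  rw [integral_sub (integrable_cauchyKernel_smul hh hz) (integrable_cauchyKernel_smul hh hw)]

lemma tendsto_smul_cauchyTransform (hh : Integrable h σ) :
    Tendsto (fun t : ℝ ↦ (-(t * I)) • cauchyTransform σ h (-(t * I))) atTop
      (𝓝 (∫ x, h x ∂σ)) := by
  simp only [cauchyTransform, ← integral_smul, smul_smul]
  refine tendsto_integral_filter_of_dominated_convergence (fun x ↦ ‖h x‖)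
    (.of_forall fun t ↦
      ((measurable_cauchyKernel _).const_mul _).aestronglyMeasurable.smul hh.1)
    ?_ hh.norm (.of_forall fun x ↦ ?_)
  · filter_upwards [eventually_gt_atTop 0] with t ht
    refine .of_forall fun x ↦ ?_
    rw [norm_smul]
    refine mul_le_of_le_one_left (norm_nonneg _) ?_
    calc ‖-(t * I) * cauchyKernel (-(t * I)) x‖
        = t * ‖cauchyKernel (-(t * I)) x‖ := by simp [abs_of_pos ht]
      _ ≤ t * t⁻¹ := by gcongr; exact norm_cauchyKernel_neg_mul_I_le ht x
      _ = 1 := mul_inv_cancel₀ ht.ne'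
  · simpa only [one_smul] using (tendsto_neg_mul_I_mul_cauchyKernel x).smul_const (h x)

end Transform

/-- The densities `h` whose measure `h • σ` has a Cauchy transform vanishing on the open lower
half-plane. They are kept as functions rather than classes in `L¹`, so that multiplication by a
function acts on them pointwise. -/
noncomputable def cauchyNull (σ : Measure ℝ) (E : Type*) [NormedAddCommGroup E]
    [NormedSpace ℂ E] : Submodule ℂ (ℝ → E) where
  carrier := {h | Integrable h σ ∧ ∀ z : ℂ, z.im < 0 → cauchyTransform σ h z = 0}
  zero_mem' := ⟨integrable_zero _ _ _, fun z _ ↦ by simp [cauchyTransform]⟩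
  add_mem' h₁ h₂ := ⟨h₁.1.add h₂.1, fun z hz ↦ by
    rw [cauchyTransform_add h₁.1 h₂.1 hz.ne, h₁.2 z hz, h₂.2 z hz, add_zero]⟩
  smul_mem' c h hh := ⟨hh.1.smul c, fun z hz ↦ by
    rw [cauchyTransform_smul, hh.2 z hz, smul_zero]⟩

section Null

variable {σ : Measure ℝ} {h : ℝ → E}

lemma mem_cauchyNull_of_integral_sq_eq_zero (hh : Integrable h σ)
    (hsq : ∀ z : ℂ, z.im < 0 → ∫ x, cauchyKernel z x ^ 2 • h x ∂σ = 0) :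
    h ∈ cauchyNull σ E := by
  refine ⟨hh, fun z hz ↦ ?_⟩
  have hderiv : ∀ w : ℂ, w.im < 0 → HasDerivAt (cauchyTransform σ h) 0 w := fun w hw ↦ by
    simpa only [hsq w hw, neg_zero] using hasDerivAt_cauchyTransform hh hw.ne
  have hconst : ∀ w : ℂ, w.im < 0 → cauchyTransform σ h z = cauchyTransform σ h w := fun w hw ↦
    (isOpen_lt Complex.continuous_im continuous_const).is_const_of_deriv_eq_zero
      (convex_halfSpace_im_lt 0).isPreconnected
      (fun u hu ↦ (hderiv u hu).differentiableAt.differentiableWithinAt)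
      (fun u hu ↦ (hderiv u hu).deriv) hz hw
  have hbound : ∀ t : ℝ, 0 < t → ‖cauchyTransform σ h z‖ ≤ t⁻¹ * ∫ x, ‖h x‖ ∂σ := fun t ht ↦ by
    have him : (-(t * I)).im = -t := by simp
    rw [hconst (-(t * I)) (by linarith)]
    simpa [abs_of_pos ht] using
      norm_cauchyTransform_le hh (z := -(t * I)) (by linarith)
  have hlim : Tendsto (fun t : ℝ ↦ t⁻¹ * ∫ x, ‖h x‖ ∂σ) atTop (𝓝 0) := by
    simpa using tendsto_inv_atTop_zero.mul_const (∫ x, ‖h x‖ ∂σ)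
  exact norm_le_zero_iff.1 <| ge_of_tendsto hlim <|
    (eventually_gt_atTop 0).mono hbound

lemma integral_sq_eq_zero_of_mem_cauchyNull (hh : h ∈ cauchyNull σ E) {z : ℂ} (hz : z.im < 0) :
    ∫ x, cauchyKernel z x ^ 2 • h x ∂σ = 0 := by
  have hzero : cauchyTransform σ h =ᶠ[𝓝 z] fun _ ↦ 0 :=
    ((isOpen_lt Complex.continuous_im continuous_const).eventually_mem hz).mono hh.2
  exact neg_eq_zero.1 <| (hasDerivAt_cauchyTransform hh.1 hz.ne).unique <|
    (hasDerivAt_const z 0).congr_of_eventuallyEq hzero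

lemma mem_cauchyNull_of_tendsto {F : ℕ → ℝ → E} {bound : ℝ → ℝ}
    (hF : ∀ n, F n ∈ cauchyNull σ E) (hbound : Integrable bound σ)
    (hle : ∀ n x, ‖F n x‖ ≤ bound x) (hlim : ∀ x, Tendsto (F · x) atTop (𝓝 (h x))) :
    h ∈ cauchyNull σ E := by
  have hmeas : AEStronglyMeasurable h σ :=
    aestronglyMeasurable_of_tendsto_ae atTop (fun n ↦ (hF n).1.1) (.of_forall hlim)
  refine ⟨hbound.mono' hmeas (.of_forall fun x ↦
    le_of_tendsto' (hlim x).norm (hle · x)), fun z hz ↦ ?_⟩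
  refine tendsto_nhds_unique (tendsto_integral_of_dominated_convergence
    (F := fun n x ↦ cauchyKernel z x • F n x) (fun x ↦ |z.im|⁻¹ * bound x)
    (fun n ↦ (integrable_cauchyKernel_smul (hF n).1 hz.ne).1) (hbound.const_mul _)
    (fun n ↦ .of_forall fun x ↦ ?_) (.of_forall fun x ↦ (hlim x).const_smul _)) ?_
  · rw [norm_smul]
    gcongr
    exacts [norm_cauchyKernel_le hz.ne x, hle n x]
  · exact tendsto_const_nhds.congr fun n ↦ ((hF n).2 z hz).symm

lemma integral_eq_zero_of_mem_cauchyNull (hh : h ∈ cauchyNull σ E) : ∫ x, h x ∂σ = 0 := by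
  refine tendsto_nhds_unique (tendsto_smul_cauchyTransform hh.1) (tendsto_const_nhds.congr' ?_)
  filter_upwards [eventually_gt_atTop 0] with t ht
  rw [hh.2 _ (by simpa using ht), smul_zero]

end Null

/-- The functions multiplication by which preserves `cauchyNull σ E`. -/
noncomputable def cauchyMultiplier (σ : Measure ℝ) (E : Type*) [NormedAddCommGroup E]
    [NormedSpace ℂ E] : Subalgebra ℂ (ℝ → ℂ) where
  carrier := {φ | ∀ h ∈ cauchyNull σ E, φ • h ∈ cauchyNull σ E}
  mul_mem' hφ hψ h hh := by
    rw [mul_smul]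
    exact hφ _ (hψ h hh)
  add_mem' hφ hψ h hh := by
    rw [add_smul]
    exact add_mem (hφ h hh) (hψ h hh)
  algebraMap_mem' c _ hh := (cauchyNull σ E).smul_mem c hh

section Multiplier

variable {σ : Measure ℝ}

lemma cauchyKernel_mem_cauchyMultiplier {z : ℂ} (hz : z.im < 0) :
    cauchyKernel z ∈ cauchyMultiplier σ E := by
  refine fun h hh ↦ ⟨integrable_cauchyKernel_smul hh.1 hz.ne, fun w hw ↦ ?_⟩
  rcases eq_or_ne w z with rfl | hwz
  · simpa only [cauchyTransform, Pi.smul_apply', smul_smul, ← sq] using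
      integral_sq_eq_zero_of_mem_cauchyNull hh hz
  · rw [cauchyTransform_cauchyKernel_smul hh.1 hw.ne hz.ne hwz, hh.2 w hw, hh.2 z hz, sub_zero,
      smul_zero]

lemma mem_cauchyMultiplier_of_tendsto {φ : ℕ → ℝ → ℂ} {ψ : ℝ → ℂ} {C : ℝ}
    (hφ : ∀ n, φ n ∈ cauchyMultiplier σ E) (hle : ∀ n x, ‖φ n x‖ ≤ C)
    (hlim : ∀ x, Tendsto (φ · x) atTop (𝓝 (ψ x))) : ψ ∈ cauchyMultiplier σ E := by
  intro h hh
  refine mem_cauchyNull_of_tendsto (fun n ↦ hφ n h hh) (hh.1.norm.const_mul C)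
    (fun n x ↦ ?_) fun x ↦ (hlim x).smul_const (h x)
  rw [Pi.smul_apply', norm_smul]
  gcongr
  exact hle n x

lemma exp_mem_cauchyMultiplier {φ : ℝ → ℂ} {C : ℝ} (hφ : φ ∈ cauchyMultiplier σ E)
    (hle : ∀ x, ‖φ x‖ ≤ C) : (fun x ↦ Complex.exp (φ x)) ∈ cauchyMultiplier σ E := by
  refine mem_cauchyMultiplier_of_tendsto (C := Real.exp C)
    (φ := fun n ↦ ∑ k ∈ Finset.range n, (k.factorial : ℂ)⁻¹ • φ ^ k)
    (fun n ↦ sum_mem fun k _ ↦ Subalgebra.smul_mem _ (pow_mem hφ k) _) (fun n x ↦ ?_) fun x ↦ ?_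
  · calc ‖(∑ k ∈ Finset.range n, (k.factorial : ℂ)⁻¹ • φ ^ k) x‖
        ≤ ∑ k ∈ Finset.range n, ‖φ x‖ ^ k / k.factorial := by
          simpa [div_eq_inv_mul] using
            norm_sum_le (Finset.range n) fun k ↦ (k.factorial : ℂ)⁻¹ * φ x ^ k
      _ ≤ Real.exp ‖φ x‖ := Real.sum_le_exp_of_nonneg (norm_nonneg _) n
      _ ≤ Real.exp C := Real.exp_le_exp.2 (hle x)
  · simpa [Complex.exp_eq_exp_ℂ, div_eq_inv_mul] using
      (NormedSpace.expSeries_div_hasSum_exp (φ x)).tendsto_sum_nat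

end Multiplier

lemma exists_finset_ball_cover_sum_radius_le {K : Set ℝ} (hK : IsCompact K) (h0 : volume K = 0)
    {ε : ℝ} (hε : 0 < ε) :
    ∃ (t : Finset ℝ) (r : ℝ → ℝ), ↑t ⊆ K ∧ (∀ a ∈ t, 0 < r a) ∧ K ⊆ ⋃ a ∈ t, ball a (r a) ∧
      ∑ a ∈ t, r a ≤ ε := by
  obtain ⟨s, r, -, hsK, hr, hcover, hsum⟩ :=
    Besicovitch.exists_closedBall_covering_tsum_measure_le (volume : Measure ℝ)
      (ENNReal.ofReal_pos.2 hε).ne' (fun _ ↦ Ioi 0) K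
      fun _ _ δ hδ ↦ ⟨δ / 2, half_pos hδ, half_pos hδ, half_lt_self hδ⟩
  have hcover' : K ⊆ ⋃ a ∈ s, ball a (2 * r a) := hcover.trans <| iUnion₂_mono fun a ha ↦
    closedBall_subset_ball (lt_two_mul_self (hr a ha))
  obtain ⟨t, hts, htfin, htK⟩ := hK.elim_finite_subcover_image (fun _ _ ↦ isOpen_ball) hcover'
  lift t to Finset ℝ using htfin
  have hrt : ∀ a ∈ t, 0 < 2 * r a := fun a ha ↦ mul_pos two_pos (hr a (hts ha))
  refine ⟨t, fun a ↦ 2 * r a, hts.trans hsK, hrt, htK, ?_⟩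
  rw [← ENNReal.ofReal_le_ofReal_iff hε.le, ENNReal.ofReal_sum_of_nonneg fun a ha ↦ (hrt a ha).le]
  calc ∑ a ∈ t, ENNReal.ofReal (2 * r a)
      = ∑' a : (t : Set ℝ), volume (closedBall (a : ℝ) (r a)) := by
        simp only [Real.volume_closedBall]
        exact (t.tsum_subtype' fun a ↦ ENNReal.ofReal (2 * r a)).symm
    _ ≤ ∑' a : s, volume (closedBall (a : ℝ) (r a)) :=
        ENNReal.tsum_mono_subtype (fun a ↦ volume (closedBall a (r a))) hts
    _ ≤ ENNReal.ofReal ε := by simpa only [h0, zero_add] using hsum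

/-- The multiple of a Cauchy kernel with pole `a - r * I` normalized to take the value `-1` at `a`.
Its real part is `-r ^ 2 / ((x - a) ^ 2 + r ^ 2)`, a negative bump at `a` of width `r`. -/
noncomputable def cauchyBump (a r : ℝ) : ℝ → ℂ :=
  (r * I) • cauchyKernel (a - r * I)

section Bump

variable {a r x : ℝ}

lemma re_cauchyBump (a r x : ℝ) :
    (cauchyBump a r x).re = -(r ^ 2 / ((x - a) ^ 2 + r ^ 2)) := by
  simp only [cauchyBump, cauchyKernel, Pi.smul_apply, smul_eq_mul, Complex.mul_re, Complex.mul_im,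
    Complex.sub_re, Complex.sub_im, Complex.inv_im, Complex.normSq_apply, Complex.ofReal_re,
    Complex.ofReal_im, Complex.I_re, Complex.I_im, mul_zero, mul_one, zero_mul, sub_self,
    zero_sub]
  ring

lemma re_cauchyBump_nonpos (a r x : ℝ) : (cauchyBump a r x).re ≤ 0 := by
  rw [re_cauchyBump, neg_nonpos]
  positivity

lemma re_cauchyBump_le_neg_half (hx : x ∈ ball a r) : (cauchyBump a r x).re ≤ -(1 / 2) := by
  rw [mem_ball, Real.dist_eq] at hx
  have hr : 0 < r := (abs_nonneg _).trans_lt hx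
  have hsq : (x - a) ^ 2 < r ^ 2 := sq_lt_sq.2 (hx.trans_le (le_abs_self r))
  rw [re_cauchyBump, neg_le_neg_iff, div_le_div_iff₀ two_pos (by positivity)]
  linarith

lemma norm_cauchyBump_le_one (hr : r ≠ 0) : ‖cauchyBump a r x‖ ≤ 1 := by
  have hk : ‖cauchyKernel (a - r * I) x‖ ≤ |r|⁻¹ := by
    simpa using norm_cauchyKernel_le (z := a - r * I) (by simpa using hr) x
  calc ‖cauchyBump a r x‖ = |r| * ‖cauchyKernel (a - r * I) x‖ := by simp [cauchyBump]
    _ ≤ |r| * |r|⁻¹ := by gcongr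
    _ = 1 := mul_inv_cancel₀ (abs_ne_zero.2 hr)

lemma norm_cauchyBump_mul_dist_le (hr : 0 < r) : ‖cauchyBump a r x‖ * dist x a ≤ r := by
  have hdist : dist x a ≤ ‖(a - r * I : ℂ) - x‖ := by
    simpa [dist_comm x, Real.dist_eq] using
      Complex.abs_re_le_norm ((a - r * I : ℂ) - x)
  have hne : (a - r * I : ℂ) - x ≠ 0 := sub_ofReal_ne_zero (by simpa using hr.ne') x
  calc ‖cauchyBump a r x‖ * dist x a
      ≤ ‖cauchyBump a r x‖ * ‖(a - r * I : ℂ) - x‖ := by gcongr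
    _ = r := by
      rw [← norm_mul, cauchyBump, Pi.smul_apply, smul_eq_mul, cauchyKernel,
        inv_mul_cancel_right₀ hne]
      simp [abs_of_pos hr]

lemma cauchyBump_mem_cauchyMultiplier {σ : Measure ℝ} (hr : 0 < r) :
    cauchyBump a r ∈ cauchyMultiplier σ E :=
  Subalgebra.smul_mem _ (cauchyKernel_mem_cauchyMultiplier (by simpa using hr)) _

lemma re_sum_cauchyBump_nonpos (t : Finset ℝ) (r : ℝ → ℝ) (x : ℝ) :
    ((∑ a ∈ t, cauchyBump a (r a)) x).re ≤ 0 := by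
  rw [Finset.sum_apply, Complex.re_sum]
  exact Finset.sum_nonpos fun a _ ↦ re_cauchyBump_nonpos a (r a) x

lemma re_sum_cauchyBump_le_neg_half {t : Finset ℝ} {r : ℝ → ℝ}
    (hx : x ∈ ⋃ a ∈ t, ball a (r a)) : ((∑ a ∈ t, cauchyBump a (r a)) x).re ≤ -(1 / 2) := by
  obtain ⟨a, ha, hxa⟩ := mem_iUnion₂.1 hx
  rw [Finset.sum_apply, Complex.re_sum, ← Finset.add_sum_erase t _ ha]
  have hrest : ∑ b ∈ t.erase a, (cauchyBump b (r b) x).re ≤ 0 :=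
    Finset.sum_nonpos fun b _ ↦ re_cauchyBump_nonpos b (r b) x
  linarith [re_cauchyBump_le_neg_half hxa]

lemma norm_sum_cauchyBump_le_card {t : Finset ℝ} {r : ℝ → ℝ} (hr : ∀ a ∈ t, r a ≠ 0) :
    ‖(∑ a ∈ t, cauchyBump a (r a)) x‖ ≤ t.card := by
  rw [Finset.sum_apply]
  simpa using norm_sum_le_of_le t fun a ha ↦ norm_cauchyBump_le_one (x := x) (hr a ha)

lemma norm_sum_cauchyBump_mul_infDist_le {t : Finset ℝ} {r : ℝ → ℝ} {s : Set ℝ} (hts : ↑t ⊆ s)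
    (hr : ∀ a ∈ t, 0 < r a) :
    ‖(∑ a ∈ t, cauchyBump a (r a)) x‖ * infDist x s ≤ ∑ a ∈ t, r a :=
  calc ‖(∑ a ∈ t, cauchyBump a (r a)) x‖ * infDist x s
      ≤ (∑ a ∈ t, ‖cauchyBump a (r a) x‖) * infDist x s := by
        rw [Finset.sum_apply]
        exact mul_le_mul_of_nonneg_right (norm_sum_le _ _) infDist_nonneg
    _ = ∑ a ∈ t, ‖cauchyBump a (r a) x‖ * infDist x s := Finset.sum_mul ..
    _ ≤ ∑ a ∈ t, ‖cauchyBump a (r a) x‖ * dist x a := by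
        gcongr with a ha
        exact infDist_le_dist_of_mem (hts ha)
    _ ≤ ∑ a ∈ t, r a := Finset.sum_le_sum fun a ha ↦ norm_cauchyBump_mul_dist_le (hr a ha)

end Bump

section NullCompact

variable {σ : Measure ℝ} {K : Set ℝ}

lemma exists_mem_cauchyMultiplier_re_le (hK : IsCompact K) (h0 : volume K = 0) {N ε : ℝ}
    (hN : 0 < N) (hε : 0 < ε) :
    ∃ G ∈ cauchyMultiplier σ E, (∃ C, ∀ x, ‖G x‖ ≤ C) ∧ (∀ x, (G x).re ≤ 0) ∧
      (∀ x ∈ K, (G x).re ≤ -N) ∧ ∀ x, ‖G x‖ * infDist x K ≤ ε := by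
  obtain ⟨t, r, htK, hr, hcover, hsum⟩ :=
    exists_finset_ball_cover_sum_radius_le hK h0 (ε := ε / (2 * N)) (by positivity)
  set S : ℝ → ℂ := ∑ a ∈ t, cauchyBump a (r a)
  have hmem : S ∈ cauchyMultiplier σ E :=
    sum_mem fun a ha ↦ cauchyBump_mem_cauchyMultiplier (hr a ha)
  have hre : ∀ x, (((2 * N : ℝ) : ℂ) • S x).re = 2 * N * (S x).re := fun x ↦
    Complex.re_ofReal_mul _ _
  have hnorm : ∀ x, ‖((2 * N : ℝ) : ℂ) • S x‖ = 2 * N * ‖S x‖ := fun x ↦ by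
    rw [norm_smul, Complex.norm_of_nonneg (by positivity)]
  refine ⟨((2 * N : ℝ) : ℂ) • S, Subalgebra.smul_mem _ hmem _,
    ⟨2 * N * t.card, fun x ↦ ?_⟩, fun x ↦ ?_, fun x hx ↦ ?_, fun x ↦ ?_⟩
  · rw [Pi.smul_apply, hnorm]
    gcongr
    exact norm_sum_cauchyBump_le_card fun a ha ↦ (hr a ha).ne'
  · rw [Pi.smul_apply, hre]
    exact mul_nonpos_of_nonneg_of_nonpos (by positivity) (re_sum_cauchyBump_nonpos t r x)
  · rw [Pi.smul_apply, hre]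
    calc 2 * N * (S x).re ≤ 2 * N * -(1 / 2) := by
          gcongr
          exact re_sum_cauchyBump_le_neg_half (hcover hx)
      _ = -N := by ring
  · rw [Pi.smul_apply, hnorm, mul_assoc]
    calc 2 * N * (‖S x‖ * infDist x K) ≤ 2 * N * (ε / (2 * N)) := by
          gcongr
          exact (norm_sum_cauchyBump_mul_infDist_le htK hr).trans hsum
      _ = ε := by field_simp

lemma indicator_compl_mem_cauchyMultiplier (hK : IsCompact K) (h0 : volume K = 0) :
    Kᶜ.indicator 1 ∈ cauchyMultiplier σ E := by
  rcases K.eq_empty_or_nonempty with rfl | hne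
  · simp
  choose G hG hbdd hre hreK hdist using fun n : ℕ ↦
    exists_mem_cauchyMultiplier_re_le (σ := σ) (E := E) hK h0 n.cast_add_one_pos
      (one_div_pos.2 (n.cast_add_one_pos (α := ℝ)))
  refine mem_cauchyMultiplier_of_tendsto (φ := fun n x ↦ Complex.exp (G n x)) (C := 1)
    (fun n ↦ (hbdd n).elim fun C hC ↦ exp_mem_cauchyMultiplier (hG n) hC) (fun n x ↦ ?_) fun x ↦ ?_
  · rw [Complex.norm_exp]
    exact Real.exp_le_one_iff.2 (hre n x)
  by_cases hx : x ∈ K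
  · rw [indicator_of_notMem (notMem_compl_iff.2 hx)]
    refine Complex.tendsto_exp_comap_re_atBot.comp (tendsto_comap_iff.2 ?_)
    refine tendsto_atBot_mono (hreK · x hx) (tendsto_neg_atTop_atBot.comp ?_)
    exact tendsto_atTop_add_const_right _ _ tendsto_natCast_atTop_atTop
  · have hpos : 0 < infDist x K := (hK.isClosed.notMem_iff_infDist_pos hne).1 hx
    have hbound : Tendsto (fun n : ℕ ↦ 1 / ((n : ℝ) + 1) / infDist x K) atTop (𝓝 0) := by
      simpa using tendsto_one_div_add_atTop_nhds_zero_nat.div_const (infDist x K)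
    have hG0 : Tendsto (G · x) atTop (𝓝 0) :=
      squeeze_zero_norm (fun n ↦ (le_div_iff₀ hpos).2 (hdist n x)) hbound
    simpa [indicator_of_mem (mem_compl hx)] using hG0.cexp

lemma setIntegral_eq_zero_of_mem_cauchyNull {h : ℝ → E} (hh : h ∈ cauchyNull σ E)
    (hK : IsCompact K) (h0 : volume K = 0) : ∫ x in K, h x ∂σ = 0 := by
  have hcompl : ∫ x in Kᶜ, h x ∂σ = 0 := by
    rw [← integral_indicator hK.measurableSet.compl,
      ← integral_eq_zero_of_mem_cauchyNull (indicator_compl_mem_cauchyMultiplier hK h0 h hh)]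
    congr 1 with x
    by_cases hx : x ∈ Kᶜ <;> simp [hx]
  rw [← integral_eq_zero_of_mem_cauchyNull hh, ← integral_add_compl hK.measurableSet hh.1, hcompl,
    add_zero]

end NullCompact

lemma setIntegral_eq_zero_of_forall_isCompact {X F : Type*} [TopologicalSpace X] [PolishSpace X]
    [MeasurableSpace X] [BorelSpace X] [NormedAddCommGroup F] [NormedSpace ℝ F]
    {μ : Measure X} {f : X → F} (hf : Integrable f μ) {s : Set X} (hs : MeasurableSet s)
    (hzero : ∀ K ⊆ s, IsCompact K → ∫ x in K, f x ∂μ = 0) : ∫ x in s, f x ∂μ = 0 := by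
  have : IsFiniteMeasure (μ.withDensity (‖f ·‖ₑ)) := isFiniteMeasure_withDensity hf.2.ne
  rw [← enorm_eq_zero]
  refine le_antisymm (le_of_forall_pos_le_add fun ε hε ↦ ?_) zero_le
  obtain ⟨K, hKs, hK, hlt⟩ := hs.exists_isCompact_sdiff_lt
    (measure_ne_top (μ.withDensity (‖f ·‖ₑ)) s) hε.ne'
  calc ‖∫ x in s, f x ∂μ‖ₑ = ‖∫ x in s \ K, f x ∂μ‖ₑ := by
        rw [setIntegral_sdiff hK.measurableSet hf.integrableOn hKs, hzero K hKs hK, sub_zero]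
    _ ≤ ∫⁻ x in s \ K, ‖f x‖ₑ ∂μ := enorm_integral_le_lintegral_enorm _
    _ = μ.withDensity (‖f ·‖ₑ) (s \ K) := (withDensity_apply _ (hs.diff hK.measurableSet)).symm
    _ ≤ 0 + ε := by simpa only [zero_add] using hlt.le

theorem absolutelyContinuous_of_vanishing_cauchy_transform_general [CompleteSpace E]
    (σ : Measure ℝ) (g : ℝ → E) (hg : Integrable g σ)
    (hcauchy : ∀ lam : ℂ, lam.im < 0 → ∫ x : ℝ, ((lam - x) ^ 2)⁻¹ • g x ∂σ = 0) :
    ∀ Δ : Set ℝ, MeasurableSet Δ → volume Δ = 0 → ∫ x in Δ, g x ∂σ = 0 := by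
  intro Δ hΔ h0
  have hnull : g ∈ cauchyNull σ E := mem_cauchyNull_of_integral_sq_eq_zero hg fun z hz ↦ by
    simpa only [cauchyKernel, inv_pow] using hcauchy z hz
  exact setIntegral_eq_zero_of_forall_isCompact hg hΔ fun K hKΔ hK ↦
    setIntegral_eq_zero_of_mem_cauchyNull hnull hK (measure_mono_null hKΔ h0)

/-- Let `ν = g·σ` be a finite complex Borel measure on `ℝ` (with `σ` a finite positive measure
and `g` a bounded measurable density) such that `∫ (λ − x)⁻² dν(x) = 0` for every `λ` in the
open lower half-plane.  Then `ν` is absolutely continuous with respect to Lebesgue measure: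
`ν(Δ) = 0` for every Borel set `Δ` of Lebesgue measure zero. -/
theorem absolutelyContinuous_of_vanishing_cauchy_transform
    (σ : Measure ℝ) [IsFiniteMeasure σ] (g : ℝ → ℂ) (hg : Measurable g)
    (hgbd : ∀ x, ‖g x‖ ≤ 1)
    (hcauchy : ∀ lam : ℂ, lam.im < 0 → ∫ x : ℝ, g x / (lam - (x : ℂ)) ^ 2 ∂σ = 0) :
    ∀ Δ : Set ℝ, MeasurableSet Δ → volume Δ = 0 → ∫ x in Δ, g x ∂σ = 0 := by
  have hint : Integrable g σ := .of_bound hg.aestronglyMeasurable 1 (.of_forall hgbd)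
  exact absolutelyContinuous_of_vanishing_cauchy_transform_general σ g hint fun lam hlam ↦ by
    simpa only [div_eq_inv_mul, smul_eq_mul] using hcauchy lam hlam
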